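/- For every N >= 2: if an FTNS system is FTNS strongly hyperbolic, then it admits a strongly hyperbolic FT(N-1)S reduction. Precisely: there exist a choice of reduction parameters (one may take (D^0)^k = -(A^0_0)^k, D_i^k = -B^0_{1,0} delta_i^k, (D^mu)^{k_1...k_mu} = -(B^mu_{1,0})^{k_1...k_mu} for mu = 1,...,N-1, all Dbar parameters zero except Dbar_i^{kj} = i*lambda*epsilon_i^{kj} with epsilon the Levi-Civita symbol and lambda a real number larger than sup over unit s of the operator norm of P_N(s)) and a constant K > 0 such that for every unit s in R^3 there is an invertible T(s) with ||T(s)|| <= K, ||T(s)^{-1}|| <= K and T(s)^{-1} P_{N-1}(s) T(s) a real diagonal matrix; in particular the system is FT(N-1)S strongly hyperbolic. -/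

import Mathlib

open Matrix
open scoped ComplexOrder

/-- The Loewner order `A ≤ B` for complex matrices: `B - A` is positive semidefinite. -/
def loewnerLE {n : Type*} [Fintype n] (A B : Matrix n n ℂ) : Prop := (B - A).PosSemidef

/-- The spectral (ℓ²-operator) norm of a complex matrix. -/
noncomputable def matOpNorm {n : Type*} [Fintype n] [DecidableEq n] (M : Matrix n n ℂ) : ℝ :=
  ‖Matrix.toEuclideanCLM (𝕜 := ℂ) M‖

/-- The Levi-Civita symbol on three indices with `lev 0 1 2 = 1`. -/
noncomputable def lev (a b c : Fin 3) : ℝ :=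
  if (a, b, c) = (0, 1, 2) ∨ (a, b, c) = (1, 2, 0) ∨ (a, b, c) = (2, 0, 1) then 1
  else if (a, b, c) = (2, 1, 0) ∨ (a, b, c) = (0, 2, 1) ∨ (a, b, c) = (1, 0, 2) then -1
  else 0

/-- Index type for the FTNS state `(v⁰, …, v^{N-1})`. -/
abbrev IN (N : ℕ) (n : ℕ → ℕ) : Type := Σ μ : Fin N, Fin (n μ)

/-- Index type for the FT(N-1)S reduction state `(dᵢ; v⁰, v¹, …, v^{N-1})`. -/
abbrev INm1 (N : ℕ) (n : ℕ → ℕ) : Type := (Fin 3 × Fin (n 0)) ⊕ IN N n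

variable (N : ℕ) (n : ℕ → ℕ)
  (A : (μ ν : ℕ) → (Fin (μ - ν + 1) → Fin 3) → Matrix (Fin (n μ)) (Fin (n ν)) ℂ)
  (A' : (μ : ℕ) → Matrix (Fin (n μ)) (Fin (n (μ + 1))) ℂ)
  (B10 : (μ : ℕ) → (Fin μ → Fin 3) → Matrix (Fin (n μ)) (Fin (n 0)) ℂ)

/-- The FTNS principal symbol `P_N(s)`. -/
noncomputable def PN (s : Fin 3 → ℝ) : Matrix (IN N n) (IN N n) ℂ :=
  Matrix.of fun r c =>
    if h1 : (c.1 : ℕ) ≤ (r.1 : ℕ) then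
      ∑ k : Fin ((r.1 : ℕ) - (c.1 : ℕ) + 1) → Fin 3,
        (∏ t, (s (k t) : ℂ)) * A r.1 c.1 k r.2 c.2
    else if h2 : (c.1 : ℕ) = (r.1 : ℕ) + 1 then
      A' r.1 r.2 (Fin.cast (congrArg n h2) c.2)
    else 0

/-- The principal symbol `P_{N-1}(s)` of the FT(N-1)S reduction, in the variables
`(v⁰, dᵢ, v¹, …, v^{N-1})`, with reduction parameters
`D⁰, D̄⁰, Dᵢ^k, D̄ᵢ^{kj}, D^μ, D̄^μ`. -/
noncomputable def PNm1
    (D0 : Fin 3 → Matrix (Fin (n 0)) (Fin (n 0)) ℂ)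
    (Dbar0 : Fin 3 → Fin 3 → Matrix (Fin (n 0)) (Fin (n 0)) ℂ)
    (Dd : Fin 3 → Fin 3 → Matrix (Fin (n 0)) (Fin (n 0)) ℂ)
    (Dbard : Fin 3 → Fin 3 → Fin 3 → Matrix (Fin (n 0)) (Fin (n 0)) ℂ)
    (DH : (μ : ℕ) → (Fin μ → Fin 3) → Matrix (Fin (n μ)) (Fin (n 0)) ℂ)
    (DbarH : (μ : ℕ) → (Fin (μ - 1) → Fin 3) → Fin 3 → Fin 3 →
      Matrix (Fin (n μ)) (Fin (n 0)) ℂ)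
    (s : Fin 3 → ℝ) : Matrix (INm1 N n) (INm1 N n) ℂ :=
  Matrix.of fun r c =>
    match r, c with
    | Sum.inl (i, m), Sum.inl (j, m') =>
        (s i : ℂ) * A 0 0 (fun _ => j) m m' + ∑ k, (s k : ℂ) * Dbard i k j m m'
    | Sum.inl (i, m), Sum.inr ⟨ν, q⟩ =>
        if h0 : (ν : ℕ) = 0 then
          ∑ k, (s k : ℂ) *
            ((if i = k then B10 0 Fin.elim0 else 0) + Dd i k) m (Fin.cast (congrArg n h0) q)
        else if h1 : (ν : ℕ) = 1 then
          (s i : ℂ) * A' 0 m (Fin.cast (congrArg n h1) q)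
        else 0
    | Sum.inr ⟨μ, m⟩, Sum.inl (j, m') =>
        if h0 : (μ : ℕ) = 0 then
          ∑ k, (s k : ℂ) * Dbar0 k j (Fin.cast (congrArg n h0) m) m'
        else
          (∑ K : Fin (μ : ℕ) → Fin 3, (∏ t, (s (K t) : ℂ)) *
              A μ 0 (fun t : Fin ((μ : ℕ) - 0 + 1) =>
                if h : (t : ℕ) < (μ : ℕ) then K ⟨t, h⟩ else j) m m')
            + (∑ K : Fin ((μ : ℕ) - 1) → Fin 3, ∑ a, (∏ t, (s (K t) : ℂ)) * (s a : ℂ) *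
                DbarH μ K a j m m')
    | Sum.inr ⟨μ, m⟩, Sum.inr ⟨ν, q⟩ =>
        if h0 : (μ : ℕ) = 0 then
          (if hc : (ν : ℕ) = 0 then
            ∑ k, (s k : ℂ) *
              (A 0 0 (fun _ => k) + D0 k) (Fin.cast (congrArg n h0) m)
                (Fin.cast (congrArg n hc) q)
          else 0)
        else if hc : (ν : ℕ) = 0 then
          ∑ K : Fin (μ : ℕ) → Fin 3, (∏ t, (s (K t) : ℂ)) *
            ((B10 μ K + DH μ K) m (Fin.cast (congrArg n hc) q))
        else PN N n A A' s ⟨μ, m⟩ ⟨ν, q⟩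

/-!
For a unit covector `s` let `S` be contraction with `s`, from the auxiliary variable `d` into `v⁰`,
let `J` be `i` times the curl symbol, and let `R` be the projection onto `(v¹, …, v^{N-1})`. Then
`S Sᴴ` projects onto `v⁰`, `S J = 0` and `Sᴴ S + J² = 1`. The map
`(d, v) ↦ (S d + X d + R v, J d, S Sᴴ v)` is injective and intertwines `P_{N-1}(s)` with
`P_N(s) ⊕ λ J ⊕ 0`, as soon as `X` solves the Sylvester equation `P_N X - λ X J = Z J²`, where `Z`
is the symbol with which `d` enters the state. Since `(λ J)² = λ²` on transverse vectors,
`X = (P_N² - λ²)⁻¹ (P_N Z J² + λ Z J)` is a solution, and the inverse exists because `λ > ‖P_N‖`.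
The pullback of the block symmetrizer `H_N ⊕ 1 ⊕ 1` along this map symmetrizes `P_{N-1}(s)`, with
uniform bounds because the map and its left inverse depend continuously on `s` in the compact
sphere. A symmetrizer with uniform bounds gives a uniformly conditioned real diagonalization.
-/

section LoewnerOrder

open scoped MatrixOrder

variable {𝕜 ι κ : Type*} [RCLike 𝕜]

theorem conjTranspose_mul_mul_le_conjTranspose_mul_mul [Fintype ι] [Finite κ] {A B : Matrix ι ι 𝕜}
    (h : A ≤ B) (C : Matrix ι κ 𝕜) : Cᴴ * A * C ≤ Cᴴ * B * C := by
  rw [Matrix.le_iff, ← Matrix.sub_mul, ← Matrix.mul_sub]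
  exact h.conjTranspose_mul_mul_same C

theorem posSemidef_fromBlocks_zero_zero [Finite ι] [Finite κ] {A : Matrix ι ι 𝕜}
    {B : Matrix κ κ 𝕜} (hA : A.PosSemidef) (hB : B.PosSemidef) :
    (fromBlocks A 0 0 B).PosSemidef := by
  classical
  cases nonempty_fintype ι
  cases nonempty_fintype κ
  obtain ⟨a, rfl⟩ := CStarAlgebra.nonneg_iff_eq_star_mul_self.mp hA.nonneg
  obtain ⟨b, rfl⟩ := CStarAlgebra.nonneg_iff_eq_star_mul_self.mp hB.nonneg
  simpa [fromBlocks_conjTranspose, fromBlocks_multiply, star_eq_conjTranspose]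
    using posSemidef_conjTranspose_mul_self (fromBlocks a 0 0 b)

theorem fromBlocks_zero_zero_le_fromBlocks_zero_zero [Finite ι] [Finite κ]
    {A A' : Matrix ι ι 𝕜} {B B' : Matrix κ κ 𝕜} (hA : A ≤ A') (hB : B ≤ B') :
    fromBlocks A 0 0 B ≤ fromBlocks A' 0 0 B' := by
  rw [Matrix.le_iff, sub_eq_add_neg, fromBlocks_neg, fromBlocks_add]
  simpa [sub_eq_add_neg] using posSemidef_fromBlocks_zero_zero hA hB

theorem exists_simultaneous_diagonalization [Fintype ι] [DecidableEq ι]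
    {H K : Matrix ι ι 𝕜} (hH : H.PosDef) (hK : K.IsHermitian) :
    ∃ (T : Matrix ι ι 𝕜) (Λ : ι → ℝ),
      Tᴴ * H * T = 1 ∧ Tᴴ * K * T = diagonal fun i => (Λ i : 𝕜) := by
  obtain ⟨B, hB, rfl⟩ := CStarAlgebra.isStrictlyPositive_iff_eq_star_mul_self.mp
    hH.isStrictlyPositive
  have hBB : B * B⁻¹ = 1 := mul_nonsing_inv B ((isUnit_iff_isUnit_det B).mp hB)
  have hK' : (B⁻¹ᴴ * K * B⁻¹).IsHermitian := isHermitian_conjTranspose_mul_mul _ hK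
  let V : Matrix ι ι 𝕜 := hK'.eigenvectorUnitary
  have hV : Vᴴ * V = 1 := Unitary.coe_star_mul_self hK'.eigenvectorUnitary
  refine ⟨B⁻¹ * V, hK'.eigenvalues, ?_, ?_⟩
  · calc (B⁻¹ * V)ᴴ * (star B * B) * (B⁻¹ * V) = Vᴴ * ((B * B⁻¹)ᴴ * (B * B⁻¹)) * V := by
          simp only [conjTranspose_mul, star_eq_conjTranspose, Matrix.mul_assoc]
      _ = 1 := by rw [hBB, conjTranspose_one, Matrix.one_mul, Matrix.mul_one, hV]
  · calc (B⁻¹ * V)ᴴ * K * (B⁻¹ * V) = Vᴴ * (B⁻¹ᴴ * K * B⁻¹) * V := by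
          simp only [conjTranspose_mul, Matrix.mul_assoc]
      _ = _ := (Unitary.conjStarAlgAut_star_apply _ _).symm.trans
          hK'.conjStarAlgAut_star_eigenvectorUnitary

open scoped Matrix.Norms.L2Operator in
theorem l2_opNorm_le_iff_conjTranspose_mul_self_le [Fintype ι] [Fintype κ] [DecidableEq κ]
    {B : Matrix ι κ ℂ} {K : ℝ} (hK : 0 ≤ K) : ‖B‖ ≤ K ↔ Bᴴ * B ≤ K ^ 2 • (1 : Matrix κ κ ℂ) := by
  classical
  rw [← Algebra.algebraMap_eq_smul_one, ← CStarAlgebra.norm_le_iff_le_algebraMap _ (sq_nonneg K)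
    (posSemidef_conjTranspose_mul_self B).nonneg, l2_opNorm_conjTranspose_mul_self, ← sq,
    sq_le_sq₀ (norm_nonneg B) hK]

end LoewnerOrder

section Symmetrizers

open scoped MatrixOrder Matrix.Norms.L2Operator

variable {ι κ : Type*} [Fintype ι] [DecidableEq ι] [Fintype κ] [DecidableEq κ]

/-- `H` is a symmetrizer of the symbol `P` with condition constant `M`: it is Hermitian, makes
`H * P` Hermitian, and satisfies `M⁻¹ ≤ H ≤ M`. Strong hyperbolicity asks for such an `H` at every
unit direction, with one `M`. -/
def IsSymmetrizer (M : ℝ) (P H : Matrix ι ι ℂ) : Prop :=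
  H.IsHermitian ∧ H * P = Pᴴ * H ∧
    loewnerLE (((M⁻¹ : ℝ) : ℂ) • 1) H ∧ loewnerLE H (((M : ℝ) : ℂ) • 1)

/-- `P` is diagonalizable with real eigenvalues by a change of basis which, together with its
inverse, has spectral norm at most `K`. -/
def IsRealDiagonalizable (K : ℝ) (P : Matrix ι ι ℂ) : Prop :=
  ∃ T Tinv : Matrix ι ι ℂ, T * Tinv = 1 ∧ Tinv * T = 1 ∧ matOpNorm T ≤ K ∧ matOpNorm Tinv ≤ K ∧
    ∃ Λ : ι → ℝ, Tinv * P * T = diagonal fun i => (Λ i : ℂ)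

theorem isSymmetrizer_iff {M : ℝ} {P H : Matrix ι ι ℂ} :
    IsSymmetrizer M P H ↔ H.IsHermitian ∧ H * P = Pᴴ * H ∧
      M⁻¹ • (1 : Matrix ι ι ℂ) ≤ H ∧ H ≤ M • (1 : Matrix ι ι ℂ) := by
  rw [← Complex.coe_smul, ← Complex.coe_smul]
  rfl

theorem isSymmetrizer_one {M : ℝ} (hM : 1 ≤ M) {P : Matrix ι ι ℂ} (hP : P.IsHermitian) :
    IsSymmetrizer M P 1 := by
  refine isSymmetrizer_iff.mpr ⟨isHermitian_one, by rw [hP.eq, one_mul, mul_one], ?_, ?_⟩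
  · simpa using smul_le_smul_of_nonneg_right (inv_le_one_of_one_le₀ hM)
      (zero_le_one (α := Matrix ι ι ℂ))
  · simpa using smul_le_smul_of_nonneg_right hM (zero_le_one (α := Matrix ι ι ℂ))

namespace IsSymmetrizer

variable {M M' K : ℝ} {P H : Matrix ι ι ℂ} {P' H' : Matrix κ κ ℂ}

theorem mono (hM : 0 < M) (hMM' : M ≤ M') (h : IsSymmetrizer M P H) : IsSymmetrizer M' P H := by
  obtain ⟨hH, hHP, hlow, hup⟩ := isSymmetrizer_iff.mp h
  refine isSymmetrizer_iff.mpr ⟨hH, hHP, le_trans ?_ hlow, hup.trans ?_⟩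
  · exact smul_le_smul_of_nonneg_right (inv_anti₀ hM hMM') zero_le_one
  · exact smul_le_smul_of_nonneg_right hMM' zero_le_one

theorem fromBlocks (h : IsSymmetrizer M P H) (h' : IsSymmetrizer M P' H') :
    IsSymmetrizer M (fromBlocks P 0 0 P') (fromBlocks H 0 0 H') := by
  obtain ⟨hH, hHP, hlow, hup⟩ := isSymmetrizer_iff.mp h
  obtain ⟨hH', hHP', hlow', hup'⟩ := isSymmetrizer_iff.mp h'
  have smul_one_eq (c : ℝ) :
      c • (1 : Matrix (ι ⊕ κ) (ι ⊕ κ) ℂ) = Matrix.fromBlocks (c • 1) 0 0 (c • 1) := by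
    rw [← fromBlocks_one, fromBlocks_smul, smul_zero, smul_zero]
  refine isSymmetrizer_iff.mpr ⟨hH.fromBlocks (conjTranspose_zero) hH', ?_, ?_, ?_⟩
  · simp [fromBlocks_conjTranspose, fromBlocks_multiply, hHP, hHP']
  · rw [smul_one_eq]
    exact fromBlocks_zero_zero_le_fromBlocks_zero_zero hlow hlow'
  · rw [smul_one_eq]
    exact fromBlocks_zero_zero_le_fromBlocks_zero_zero hup hup'

theorem comap_of_leftInverse (hM : 0 < M) (hK : 0 < K) (h : IsSymmetrizer M P' H')
    {B : Matrix κ ι ℂ} {B' : Matrix ι κ ℂ} (hBP : B * P = P' * B) (hB'B : B' * B = 1)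
    (hB : ‖B‖ ≤ K) (hB' : ‖B'‖ ≤ K) : IsSymmetrizer (M * K ^ 2) P (Bᴴ * H' * B) := by
  obtain ⟨hH, hHP, hlow, hup⟩ := isSymmetrizer_iff.mp h
  have hBB : Bᴴ * B ≤ K ^ 2 • (1 : Matrix ι ι ℂ) :=
    (l2_opNorm_le_iff_conjTranspose_mul_self_le hK.le).mp hB
  have hone : 1 ≤ K ^ 2 • (Bᴴ * B) := by
    have := conjTranspose_mul_mul_le_conjTranspose_mul_mul
      ((l2_opNorm_le_iff_conjTranspose_mul_self_le hK.le).mp hB') B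
    rw [← Matrix.mul_assoc, ← conjTranspose_mul, hB'B, Matrix.mul_assoc, hB'B] at this
    simpa using this
  refine isSymmetrizer_iff.mpr ⟨isHermitian_conjTranspose_mul_mul B hH, ?_, ?_, ?_⟩
  · calc Bᴴ * H' * B * P = Bᴴ * (H' * P') * B := by simp only [Matrix.mul_assoc, hBP]
      _ = (P' * B)ᴴ * H' * B := by rw [hHP, conjTranspose_mul]; simp only [Matrix.mul_assoc]
      _ = Pᴴ * (Bᴴ * H' * B) := by rw [← hBP, conjTranspose_mul]; simp only [Matrix.mul_assoc]
  · rw [inv_smul_le_iff_of_pos (by positivity)]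
    calc (1 : Matrix ι ι ℂ) ≤ K ^ 2 • (Bᴴ * B) := hone
      _ = (M * K ^ 2) • (Bᴴ * (M⁻¹ • (1 : Matrix κ κ ℂ)) * B) := by
        simp [smul_smul, mul_right_comm M, hM.ne']
      _ ≤ (M * K ^ 2) • (Bᴴ * H' * B) :=
        smul_le_smul_of_nonneg_left (conjTranspose_mul_mul_le_conjTranspose_mul_mul hlow B)
          (by positivity)
  · calc Bᴴ * H' * B ≤ Bᴴ * (M • (1 : Matrix κ κ ℂ)) * B :=
          conjTranspose_mul_mul_le_conjTranspose_mul_mul hup B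
      _ = M • (Bᴴ * B) := by simp
      _ ≤ M • K ^ 2 • (1 : Matrix ι ι ℂ) := smul_le_smul_of_nonneg_left hBB hM.le
      _ = (M * K ^ 2) • (1 : Matrix ι ι ℂ) := smul_smul _ _ _

theorem posDef (hM : 0 < M) (h : IsSymmetrizer M P H) : H.PosDef := by
  obtain ⟨-, -, hlow, -⟩ := isSymmetrizer_iff.mp h
  simpa using (PosDef.one.smul (inv_pos.mpr hM)).add_posSemidef hlow

theorem isRealDiagonalizable (hM : 0 < M) (h : IsSymmetrizer M P H) :
    IsRealDiagonalizable (√M) P := by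
  obtain ⟨hH, hHP, hlow, hup⟩ := isSymmetrizer_iff.mp h
  have hHP' : (H * P).IsHermitian := by rw [Matrix.IsHermitian, conjTranspose_mul, hH.eq, hHP]
  obtain ⟨T, Λ, hT, hΛ⟩ := exists_simultaneous_diagonalization (h.posDef hM) hHP'
  have hT' : T * (Tᴴ * H) = 1 := mul_eq_one_comm.mp hT
  refine ⟨T, Tᴴ * H, hT', hT, ?_, ?_, Λ, by rw [Matrix.mul_assoc Tᴴ]; exact hΛ⟩
  · refine (l2_opNorm_le_iff_conjTranspose_mul_self_le (Real.sqrt_nonneg M)).mpr ?_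
    rw [Real.sq_sqrt hM.le, ← inv_smul_le_iff_of_pos hM]
    calc M⁻¹ • (Tᴴ * T) = Tᴴ * (M⁻¹ • (1 : Matrix ι ι ℂ)) * T := by simp
      _ ≤ Tᴴ * H * T := conjTranspose_mul_mul_le_conjTranspose_mul_mul hlow T
      _ = 1 := hT
  · refine (l2_opNorm_le_iff_conjTranspose_mul_self_le (Real.sqrt_nonneg M)).mpr ?_
    rw [Real.sq_sqrt hM.le, conjTranspose_mul, conjTranspose_conjTranspose, hH.eq,
      Matrix.mul_assoc, hT', Matrix.mul_one]
    exact hup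

end IsSymmetrizer

end Symmetrizers

section Sylvester

variable {R ι κ : Type*} [CommRing R] [Fintype ι] [Fintype κ] [DecidableEq κ]

/-- The solution `Y` of the Sylvester equation `Q * Y - Y * D = C` for right-hand sides with
`C * D * D = μ • C`, provided that `Q * Q - μ • 1` is invertible. -/
noncomputable def sylvesterSolution (Q : Matrix κ κ R) (D : Matrix ι ι R) (C : Matrix κ ι R)
    (μ : R) : Matrix κ ι R :=
  (Q * Q - μ • 1)⁻¹ * (Q * C + C * D)

theorem mul_sylvesterSolution_sub {Q : Matrix κ κ R} {D : Matrix ι ι R} {C : Matrix κ ι R} {μ : R}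
    (hQ : IsUnit (Q * Q - μ • 1)) (hC : C * D * D = μ • C) :
    Q * sylvesterSolution Q D C μ - sylvesterSolution Q D C μ * D = C := by
  have hcomm : Commute Q (Q * Q - μ • 1)⁻¹ := by
    rw [← Matrix.zpow_neg_one]
    refine Matrix.Commute.zpow_right (Commute.sub_right ?_ ?_) (-1)
    · exact (Commute.refl Q).mul_right (Commute.refl Q)
    · exact (Commute.one_right Q).smul_right μ
  have hdet := (isUnit_iff_isUnit_det _).mp hQ
  calc Q * sylvesterSolution Q D C μ - sylvesterSolution Q D C μ * D
      = (Q * Q - μ • 1)⁻¹ * (Q * (Q * C + C * D) - (Q * C + C * D) * D) := by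
        rw [sylvesterSolution, ← Matrix.mul_assoc, hcomm.eq, Matrix.mul_assoc, Matrix.mul_assoc,
          ← Matrix.mul_sub]
    _ = (Q * Q - μ • 1)⁻¹ * ((Q * Q - μ • 1) * C) := by
        simp only [Matrix.mul_add, Matrix.add_mul, hC, Matrix.sub_mul, Matrix.smul_mul,
          Matrix.one_mul, Matrix.mul_assoc]
        abel_nf
    _ = C := nonsing_inv_mul_cancel_left _ _ hdet

theorem sylvesterSolution_mul {Q : Matrix κ κ R} {D P : Matrix ι ι R} (C : Matrix κ ι R) (μ : R)
    (hP : Commute D P) :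
    sylvesterSolution Q D C μ * P = sylvesterSolution Q D (C * P) μ := by
  simp only [sylvesterSolution, Matrix.mul_assoc, Matrix.add_mul, hP.eq]

open scoped Matrix.Norms.L2Operator in
theorem isUnit_mul_self_sub_sq_smul_one {Q : Matrix κ κ ℂ} {l : ℂ} (hQ : ‖Q‖ < ‖l‖) :
    IsUnit (Q * Q - l ^ 2 • 1) := by
  cases subsingleton_or_nontrivial (Matrix κ κ ℂ)
  · exact isUnit_of_subsingleton _
  have hmem : l ^ 2 ∈ resolventSet ℂ (Q * Q) := by
    refine spectrum.mem_resolventSet_of_norm_lt ((norm_mul_le Q Q).trans_lt ?_)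
    rw [norm_pow, sq]
    exact mul_self_lt_mul_self (norm_nonneg Q) hQ
  rw [spectrum.mem_resolventSet_iff, Algebra.algebraMap_eq_smul_one] at hmem
  simpa using hmem.neg

end Sylvester

section Reduction

variable {R ι κ : Type*} [CommRing R] [StarRing R] [Fintype ι]

/-- The projection onto the orthogonal complement of the range of a partial isometry `S`. -/
def rangeCompl [DecidableEq κ] (S : Matrix κ ι R) : Matrix κ κ R := 1 - S * Sᴴ

theorem mul_conjTranspose_add_rangeCompl [DecidableEq κ] (S : Matrix κ ι R) :
    S * Sᴴ + rangeCompl S = 1 :=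
  add_sub_cancel _ _

variable [DecidableEq ι] [Fintype κ]

/-- The algebraic Helmholtz splitting of the symbols `S` of a divergence and `J` of a curl: the
Hermitian `J` is annihilated by `S`, and the longitudinal part `Sᴴ * S` and the transverse part
`J * J` add up to the identity. -/
structure IsHelmholtzSplitting (S : Matrix κ ι R) (J : Matrix ι ι R) : Prop where
  isHermitian : J.IsHermitian
  mul_eq_zero : S * J = 0
  add_eq_one : Sᴴ * S + J * J = 1

namespace IsHelmholtzSplitting

variable {S : Matrix κ ι R} {J : Matrix ι ι R} (h : IsHelmholtzSplitting S J)
include h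

theorem mul_conjTranspose_eq_zero : J * Sᴴ = 0 := by
  simpa [conjTranspose_mul, h.isHermitian.eq] using congrArg conjTranspose h.mul_eq_zero

theorem mul_mul_self : J * (J * J) = J := by
  have := congrArg (J * ·) h.add_eq_one
  simpa [Matrix.mul_add, ← Matrix.mul_assoc J Sᴴ, h.mul_conjTranspose_eq_zero] using this

theorem mul_conjTranspose_mul_self : S * (Sᴴ * S) = S := by
  have := congrArg (S * ·) h.add_eq_one
  simpa [Matrix.mul_add, ← Matrix.mul_assoc S J, h.mul_eq_zero] using this

end IsHelmholtzSplitting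

variable [DecidableEq κ]

/-- The symbol of a first-order reduction in one block of the state: `Q` is the symbol acting on
the state, the auxiliary variable replaces the range of `S`, `Z` is the symbol with which the
auxiliary variable enters, and `l • J` is the freely chosen evolution of its transverse part. -/
def reduction (Q : Matrix κ κ R) (S Z : Matrix κ ι R) (J : Matrix ι ι R) (l : R) :
    Matrix (ι ⊕ κ) (ι ⊕ κ) R :=
  fromBlocks (Sᴴ * Z + l • J) (Sᴴ * Q * rangeCompl S) (rangeCompl S * Z)
    (rangeCompl S * Q * rangeCompl S)

/-- The off-diagonal correction that removes the coupling of the transverse auxiliary variable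
into the state. -/
noncomputable def transverseCorrection (Q : Matrix κ κ R) (Z : Matrix κ ι R) (J : Matrix ι ι R)
    (l : R) : Matrix κ ι R :=
  sylvesterSolution Q (l • J) (Z * (J * J)) (l ^ 2)

/-- Maps the variables `(d, v)` of the reduction to `(S d + X d + R v, J d, S Sᴴ v)`, where `R` is
`rangeCompl S` and `X` is the transverse correction. -/
noncomputable def decoupling (Q : Matrix κ κ R) (S Z : Matrix κ ι R) (J : Matrix ι ι R) (l : R) :
    Matrix (κ ⊕ (ι ⊕ κ)) (ι ⊕ κ) R :=
  fromRows (fromCols (S + transverseCorrection Q Z J l) (rangeCompl S))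
    (fromBlocks J 0 0 (S * Sᴴ))

/-- A left inverse of `decoupling Q S Z J l`. -/
noncomputable def decouplingInv (Q : Matrix κ κ R) (S Z : Matrix κ ι R) (J : Matrix ι ι R) (l : R) :
    Matrix (ι ⊕ κ) (κ ⊕ (ι ⊕ κ)) R :=
  fromCols (fromRows Sᴴ (rangeCompl S))
    (fromBlocks (J - Sᴴ * transverseCorrection Q Z J l * J) 0
      (-(rangeCompl S * transverseCorrection Q Z J l * J)) (S * Sᴴ))

namespace IsHelmholtzSplitting

variable {S : Matrix κ ι R} {J : Matrix ι ι R} (h : IsHelmholtzSplitting S J)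
include h

theorem rangeCompl_mul_eq_zero : rangeCompl S * S = 0 := by
  rw [rangeCompl, Matrix.sub_mul, Matrix.one_mul, Matrix.mul_assoc, h.mul_conjTranspose_mul_self,
    sub_self]

theorem conjTranspose_mul_rangeCompl_eq_zero : Sᴴ * rangeCompl S = 0 := by
  have := congrArg conjTranspose h.mul_conjTranspose_mul_self
  simp only [conjTranspose_mul, conjTranspose_conjTranspose] at this
  rw [rangeCompl, Matrix.mul_sub, Matrix.mul_one, ← Matrix.mul_assoc, this, sub_self]

theorem rangeCompl_mul_self : rangeCompl S * rangeCompl S = rangeCompl S := by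
  nth_rewrite 2 [rangeCompl]
  rw [Matrix.mul_sub, Matrix.mul_one, ← Matrix.mul_assoc, h.rangeCompl_mul_eq_zero,
    Matrix.zero_mul, sub_zero]

variable {Q : Matrix κ κ R} {Z : Matrix κ ι R} {l : R}

theorem transverseCorrection_mul_mul_self :
    transverseCorrection Q Z J l * (J * J) = transverseCorrection Q Z J l := by
  rw [transverseCorrection, sylvesterSolution_mul, Matrix.mul_assoc, Matrix.mul_assoc,
    h.mul_mul_self]
  exact ((Commute.refl J).mul_right (Commute.refl J)).smul_left l

theorem transverseCorrection_mul_conjTranspose_eq_zero :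
    transverseCorrection Q Z J l * Sᴴ = 0 := by
  rw [← h.transverseCorrection_mul_mul_self, Matrix.mul_assoc, Matrix.mul_assoc,
    h.mul_conjTranspose_eq_zero, Matrix.mul_zero, Matrix.mul_zero]

theorem mul_transverseCorrection_sub (hQ : IsUnit (Q * Q - l ^ 2 • 1)) :
    Q * transverseCorrection Q Z J l - l • (transverseCorrection Q Z J l * J) = Z * (J * J) := by
  rw [← Matrix.mul_smul]
  refine mul_sylvesterSolution_sub hQ ?_
  simp only [Matrix.mul_smul, Matrix.smul_mul, Matrix.mul_assoc, h.mul_mul_self, smul_smul, sq]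

theorem add_transverseCorrection_mul_conjTranspose :
    (S + transverseCorrection Q Z J l) * Sᴴ = S * Sᴴ := by
  rw [Matrix.add_mul, h.transverseCorrection_mul_conjTranspose_eq_zero, add_zero]

theorem decoupling_mul_reduction (hQ : IsUnit (Q * Q - l ^ 2 • 1)) (hQS : Q * S = Z * (Sᴴ * S)) :
    decoupling Q S Z J l * reduction Q S Z J l =
      fromBlocks Q 0 0 (fromBlocks (l • J) 0 0 0 : Matrix (ι ⊕ κ) (ι ⊕ κ) R) *
        decoupling Q S Z J l := by
  have hSS : S * Sᴴ * rangeCompl S = 0 := by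
    rw [Matrix.mul_assoc, h.conjTranspose_mul_rangeCompl_eq_zero, Matrix.mul_zero]
  set X := transverseCorrection Q Z J l with hX
  have hd : (S + X) * (Sᴴ * Z + l • J) + rangeCompl S * (rangeCompl S * Z) = Q * (S + X) :=
    calc (S + X) * (Sᴴ * Z + l • J) + rangeCompl S * (rangeCompl S * Z)
        = (S * Sᴴ + rangeCompl S) * Z + l • ((S + X) * J) := by
          rw [Matrix.mul_add, ← Matrix.mul_assoc, h.add_transverseCorrection_mul_conjTranspose,
            ← Matrix.mul_assoc (rangeCompl S), h.rangeCompl_mul_self, add_right_comm,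
            ← Matrix.add_mul, Matrix.mul_smul]
      _ = Z * (Sᴴ * S + J * J) + l • (X * J) := by
          rw [mul_conjTranspose_add_rangeCompl, h.add_eq_one, Matrix.one_mul, Matrix.mul_one,
            Matrix.add_mul, h.mul_eq_zero, zero_add]
      _ = Q * (S + X) := by
          rw [Matrix.mul_add, Matrix.mul_add, hQS, hX, add_assoc,
            eq_add_of_sub_eq (h.mul_transverseCorrection_sub hQ)]
  have hv : (S + X) * (Sᴴ * Q * rangeCompl S) + rangeCompl S * (rangeCompl S * Q * rangeCompl S) =
      Q * rangeCompl S := by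
    rw [Matrix.mul_assoc Sᴴ, Matrix.mul_assoc (rangeCompl S), ← Matrix.mul_assoc,
      ← Matrix.mul_assoc (rangeCompl S) (rangeCompl S),
      h.add_transverseCorrection_mul_conjTranspose, h.rangeCompl_mul_self,
      ← Matrix.add_mul, mul_conjTranspose_add_rangeCompl, Matrix.one_mul]
  rw [decoupling, reduction, fromRows_mul, fromCols_mul_fromBlocks, fromBlocks_multiply, hd, hv,
    fromBlocks_mul_fromRows, fromBlocks_multiply, mul_fromCols]
  simp [Matrix.mul_add, ← Matrix.mul_assoc, hSS, h.mul_conjTranspose_eq_zero, hX]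

theorem decouplingInv_mul_decoupling : decouplingInv Q S Z J l * decoupling Q S Z J l = 1 := by
  set X := transverseCorrection Q Z J l with hX
  have hXJJ : X * J * J = X := by rw [Matrix.mul_assoc, hX, h.transverseCorrection_mul_mul_self]
  have hSS : S * Sᴴ * (S * Sᴴ) = S * Sᴴ := by
    rw [← Matrix.mul_assoc, Matrix.mul_assoc S, h.mul_conjTranspose_mul_self]
  have hdd : Sᴴ * (S + X) + (J - Sᴴ * X * J) * J = 1 := by
    rw [Matrix.mul_add, Matrix.sub_mul, Matrix.mul_assoc Sᴴ, Matrix.mul_assoc Sᴴ, hXJJ,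
      add_add_sub_cancel, h.add_eq_one]
  have hvd : rangeCompl S * (S + X) + -(rangeCompl S * X * J) * J = 0 := by
    rw [Matrix.mul_add, h.rangeCompl_mul_eq_zero, zero_add, Matrix.neg_mul, Matrix.mul_assoc,
      Matrix.mul_assoc, ← Matrix.mul_assoc X, hXJJ, add_neg_cancel]
  have hvv : rangeCompl S * rangeCompl S + S * Sᴴ * (S * Sᴴ) = 1 := by
    rw [h.rangeCompl_mul_self, hSS, add_comm, mul_conjTranspose_add_rangeCompl]
  rw [decouplingInv, decoupling, fromCols_mul_fromRows, fromRows_mul, mul_fromCols, mul_fromCols,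
    fromBlocks_multiply, fromRows_fromCols_eq_fromBlocks, fromBlocks_add]
  simp only [Matrix.mul_zero, Matrix.zero_mul, add_zero, zero_add]
  rw [← hX, hdd, hvd, hvv, h.conjTranspose_mul_rangeCompl_eq_zero, fromBlocks_one]

end IsHelmholtzSplitting

end Reduction

section UniformReduction

open scoped Matrix.Norms.L2Operator

theorem continuous_fromRows {Θ m₁ m₂ n α : Type*} [TopologicalSpace Θ] [TopologicalSpace α]
    {A : Θ → Matrix m₁ n α} {B : Θ → Matrix m₂ n α} (hA : Continuous A) (hB : Continuous B) :
    Continuous fun θ => fromRows (A θ) (B θ) :=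
  continuous_matrix fun i j => i.rec (fun i => hA.matrix_elem i j) fun i => hB.matrix_elem i j

theorem continuous_fromCols {Θ m n₁ n₂ α : Type*} [TopologicalSpace Θ] [TopologicalSpace α]
    {A : Θ → Matrix m n₁ α} {B : Θ → Matrix m n₂ α} (hA : Continuous A) (hB : Continuous B) :
    Continuous fun θ => fromCols (A θ) (B θ) :=
  continuous_matrix fun i j => j.rec (hA.matrix_elem i) (hB.matrix_elem i)

variable {Θ ι κ : Type*} [TopologicalSpace Θ] [Fintype ι] [Fintype κ]
  [DecidableEq κ] {Q : Θ → Matrix κ κ ℂ} {S Z : Θ → Matrix κ ι ℂ}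
  {J : Θ → Matrix ι ι ℂ} {l : ℂ}

theorem continuous_transverseCorrection (hQ : Continuous Q) (hZ : Continuous Z) (hJ : Continuous J)
    (hl : ∀ θ, IsUnit (Q θ * Q θ - l ^ 2 • 1)) :
    Continuous fun θ => transverseCorrection (Q θ) (Z θ) (J θ) l := by
  have hinv : Continuous fun θ => (Q θ * Q θ - l ^ 2 • 1)⁻¹ := by
    refine continuous_iff_continuousAt.mpr fun θ => ?_
    obtain ⟨u, hu⟩ := (isUnit_iff_isUnit_det _).mp (hl θ)
    refine (continuousAt_matrix_inv _ ?_).comp (f := fun θ => Q θ * Q θ - l ^ 2 • 1)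
      (by fun_prop)
    exact hu ▸ NormedRing.inverse_continuousAt u
  unfold transverseCorrection sylvesterSolution
  fun_prop

theorem continuous_decoupling (hQ : Continuous Q) (hS : Continuous S) (hZ : Continuous Z)
    (hJ : Continuous J) (hl : ∀ θ, IsUnit (Q θ * Q θ - l ^ 2 • 1)) :
    Continuous fun θ => decoupling (Q θ) (S θ) (Z θ) (J θ) l := by
  have hX := continuous_transverseCorrection hQ hZ hJ hl
  unfold decoupling rangeCompl
  exact continuous_fromRows (continuous_fromCols (by fun_prop) (by fun_prop))
    (hJ.matrix_fromBlocks continuous_const continuous_const (by fun_prop))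

theorem continuous_decouplingInv (hQ : Continuous Q) (hS : Continuous S) (hZ : Continuous Z)
    (hJ : Continuous J) (hl : ∀ θ, IsUnit (Q θ * Q θ - l ^ 2 • 1)) :
    Continuous fun θ => decouplingInv (Q θ) (S θ) (Z θ) (J θ) l := by
  have hX := continuous_transverseCorrection hQ hZ hJ hl
  unfold decouplingInv rangeCompl
  exact continuous_fromCols (continuous_fromRows (by fun_prop) (by fun_prop))
    (.matrix_fromBlocks (by fun_prop) continuous_const (by fun_prop) (by fun_prop))

theorem exists_norm_le_of_continuous [CompactSpace Θ] {E : Type*} [SeminormedAddCommGroup E]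
    {f : Θ → E} (hf : Continuous f) : ∃ K, ∀ θ, ‖f θ‖ ≤ K := by
  simpa using isCompact_univ.exists_bound_of_continuousOn hf.continuousOn

theorem exists_forall_isSymmetrizer_reduction [CompactSpace Θ] [DecidableEq ι]
    (hQ : Continuous Q) (hS : Continuous S) (hZ : Continuous Z) (hJ : Continuous J)
    (hSJ : ∀ θ, IsHelmholtzSplitting (S θ) (J θ)) (hQS : ∀ θ, Q θ * S θ = Z θ * ((S θ)ᴴ * S θ))
    {lam : ℝ} (hlam : ∀ θ, ‖Q θ‖ < lam) {M : ℝ} (hM : 0 < M) :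
    ∃ M₂, 0 < M₂ ∧ ∀ θ H, IsSymmetrizer M (Q θ) H →
      ∃ H₂, IsSymmetrizer M₂ (reduction (Q θ) (S θ) (Z θ) (J θ) lam) H₂ := by
  have hunit (θ : Θ) : IsUnit (Q θ * Q θ - (lam : ℂ) ^ 2 • 1) := by
    refine isUnit_mul_self_sub_sq_smul_one ?_
    rw [Complex.norm_real]
    exact (hlam θ).trans_le (le_abs_self lam)
  obtain ⟨K₁, hK₁⟩ := exists_norm_le_of_continuous (continuous_decoupling hQ hS hZ hJ hunit)
  obtain ⟨K₂, hK₂⟩ := exists_norm_le_of_continuous (continuous_decouplingInv hQ hS hZ hJ hunit)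
  set K := max 1 (max K₁ K₂)
  have hK : 0 < K := one_pos.trans_le (le_max_left 1 _)
  have hM₁ : 0 < max M 1 := hM.trans_le (le_max_left M 1)
  refine ⟨max M 1 * K ^ 2, by positivity, fun θ H hH => ?_⟩
  have hJθ : (fromBlocks ((lam : ℂ) • J θ) 0 0 0 : Matrix (ι ⊕ κ) (ι ⊕ κ) ℂ).IsHermitian := by
    refine .fromBlocks ?_ conjTranspose_zero isHermitian_zero
    rw [Matrix.IsHermitian, conjTranspose_smul, (hSJ θ).isHermitian.eq]
    simp
  have hdecoupled := (hH.mono hM (le_max_left M 1)).fromBlocks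
    (isSymmetrizer_one (le_max_right M 1) hJθ)
  exact ⟨_, hdecoupled.comap_of_leftInverse hM₁ hK
    ((hSJ θ).decoupling_mul_reduction (hunit θ) (hQS θ)) (hSJ θ).decouplingInv_mul_decoupling
    ((hK₁ θ).trans (by simp [K])) ((hK₂ θ).trans (by simp [K]))⟩

end UniformReduction

section CurlSymbol

/-- The symbol `εᵢₖⱼ sₖ` of the curl times `i`, which makes it Hermitian. -/
noncomputable def curlSymbol (s : Fin 3 → ℝ) : Matrix (Fin 3) (Fin 3) ℂ :=
  of fun i j => Complex.I * ∑ k, (s k : ℂ) * lev i k j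

theorem curlSymbol_isHermitian (s : Fin 3 → ℝ) : (curlSymbol s).IsHermitian := by
  ext i j
  fin_cases i <;> fin_cases j <;>
    simp [curlSymbol, conjTranspose_apply, Fin.sum_univ_three, lev]

theorem vecMul_curlSymbol (s : Fin 3 → ℝ) : (fun i => (s i : ℂ)) ᵥ* curlSymbol s = 0 := by
  ext j
  fin_cases j <;> simp [vecMul, dotProduct, curlSymbol, Fin.sum_univ_three, lev] <;> ring

theorem vecMulVec_add_curlSymbol_mul_self {s : Fin 3 → ℝ} (hs : ∑ i, s i ^ 2 = 1) :
    vecMulVec (fun i => (s i : ℂ)) (fun i => (s i : ℂ)) + curlSymbol s * curlSymbol s = 1 := by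
  have hs' : (s 0 : ℂ) ^ 2 + (s 1 : ℂ) ^ 2 + (s 2 : ℂ) ^ 2 = 1 := by
    rw [Fin.sum_univ_three] at hs
    exact_mod_cast hs
  ext i j
  fin_cases i <;> fin_cases j <;>
    simp [curlSymbol, vecMulVec, mul_apply, Fin.sum_univ_three, lev] <;> ring_nf <;>
    simp only [Complex.I_sq] <;> first | linear_combination hs' | ring

theorem continuous_curlSymbol : Continuous curlSymbol := by
  refine continuous_matrix fun i j => ?_
  simp only [curlSymbol, of_apply]
  fun_prop

end CurlSymbol

section PrincipalSymbols

open scoped Kronecker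

variable {N n} (hN : 0 < N) (s : Fin 3 → ℝ)

/-- The position of the `m`-th component of `v⁰` in the FTNS state. -/
def zeroIdx (n : ℕ → ℕ) (hN : 0 < N) (m : Fin (n 0)) : IN N n := ⟨⟨0, hN⟩, m⟩

/-- The symbol of the divergence `∂ⁱ dᵢ` of the auxiliary variable, placed in the `v⁰` components
of the FTNS state. -/
noncomputable def contraction (n : ℕ → ℕ) (hN : 0 < N) (s : Fin 3 → ℝ) :
    Matrix (IN N n) (Fin 3 × Fin (n 0)) ℂ :=
  of fun r c => if r = zeroIdx n hN c.2 then (s c.1 : ℂ) else 0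

/-- The symbol with which `dⱼ` enters the evolution of the state when it replaces one derivative
of `v⁰` in the `A^μ₀` terms. -/
noncomputable def auxSymbol (N : ℕ) (s : Fin 3 → ℝ) : Matrix (IN N n) (Fin 3 × Fin (n 0)) ℂ :=
  of fun r c =>
    ∑ K : Fin (r.1 : ℕ) → Fin 3, (∏ t, (s (K t) : ℂ)) *
      A r.1 0 (fun t : Fin ((r.1 : ℕ) - 0 + 1) =>
        if h : (t : ℕ) < (r.1 : ℕ) then K ⟨t, h⟩ else c.1) r.2 c.2

/-- The principal symbol of the FT(N-1)S reduction whose parameters cancel the terms `A⁰₀` and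
`B^μ₁₀` and let `dᵢ` evolve by `lam` times its curl. -/
noncomputable def curlReducedSymbol (N : ℕ) (lam : ℝ) (s : Fin 3 → ℝ) :
    Matrix (INm1 N n) (INm1 N n) ℂ :=
  PNm1 N n A A' B10 (fun k => -(A 0 0 (fun _ => k))) (fun _ _ => 0)
    (fun i k => if i = k then -(B10 0 Fin.elim0) else 0)
    (fun i k j => (Complex.I * (lam : ℂ) * (lev i k j : ℂ)) •
      (1 : Matrix (Fin (n 0)) (Fin (n 0)) ℂ))
    (fun μ K' => -(B10 μ K')) (fun _ _ _ _ => 0) s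

theorem zeroIdx_injective : Function.Injective (zeroIdx n hN) :=
  fun _ _ h => by simpa [zeroIdx] using h

theorem exists_zeroIdx_eq_iff (r : IN N n) : (∃ m, zeroIdx n hN m = r) ↔ (r.1 : ℕ) = 0 := by
  constructor
  · rintro ⟨m, rfl⟩
    rfl
  · obtain ⟨⟨_, _⟩, m⟩ := r
    rintro rfl
    exact ⟨m, rfl⟩

theorem mul_contraction_apply {τ : Type*} (Q : Matrix τ (IN N n) ℂ) (t : τ)
    (c : Fin 3 × Fin (n 0)) :
    (Q * contraction n hN s) t c = Q t (zeroIdx n hN c.2) * s c.1 := by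
  simp [mul_apply, contraction]

theorem conjTranspose_contraction_mul_apply {τ : Type*} (Q : Matrix (IN N n) τ ℂ)
    (c : Fin 3 × Fin (n 0)) (t : τ) :
    ((contraction n hN s)ᴴ * Q) c t = s c.1 * Q (zeroIdx n hN c.2) t := by
  simp [mul_apply, contraction, conjTranspose_apply, apply_ite]

theorem mul_conjTranspose_contraction_apply_zeroIdx {τ : Type*}
    (Z : Matrix τ (Fin 3 × Fin (n 0)) ℂ) (t : τ) (m : Fin (n 0)) :
    (Z * (contraction n hN s)ᴴ) t (zeroIdx n hN m) = ∑ j, Z t (j, m) * (s j : ℂ) := by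
  simp [mul_apply, conjTranspose_apply, contraction, (zeroIdx_injective hN).eq_iff,
    Fintype.sum_prod_type, apply_ite]

theorem conjTranspose_contraction_mul_contraction :
    (contraction n hN s)ᴴ * contraction n hN s =
      vecMulVec (fun i => (s i : ℂ)) (fun i => (s i : ℂ)) ⊗ₖ 1 := by
  ext ⟨i, m⟩ ⟨j, m'⟩
  rw [conjTranspose_contraction_mul_apply]
  simp [contraction, (zeroIdx_injective hN).eq_iff, one_apply, vecMulVec]

theorem contraction_mul_curlSymbol_kronecker :
    contraction n hN s * (curlSymbol s ⊗ₖ (1 : Matrix (Fin (n 0)) (Fin (n 0)) ℂ)) = 0 := by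
  ext r ⟨j, m⟩
  have hj := congrFun (vecMul_curlSymbol s) j
  rw [mul_apply, Fintype.sum_prod_type]
  by_cases h : r = zeroIdx n hN m <;>
  simp_all [contraction, one_apply, vecMul, dotProduct]

variable {s} in
theorem isHelmholtzSplitting_contraction_curlSymbol (hs : ∑ i, s i ^ 2 = 1) :
    IsHelmholtzSplitting (contraction n hN s) (curlSymbol s ⊗ₖ 1) where
  isHermitian := by
    rw [Matrix.IsHermitian, conjTranspose_kronecker, (curlSymbol_isHermitian s).eq,
      conjTranspose_one]
  mul_eq_zero := contraction_mul_curlSymbol_kronecker hN s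
  add_eq_one := by
    rw [conjTranspose_contraction_mul_contraction, ← mul_kronecker_mul, Matrix.one_mul,
      ← add_kronecker, vecMulVec_add_curlSymbol_mul_self hs, one_kronecker_one]

variable {s} in
theorem rangeCompl_contraction (hs : ∑ i, s i ^ 2 = 1) :
    rangeCompl (contraction n hN s) = diagonal fun r => if (r.1 : ℕ) = 0 then 0 else 1 := by
  have hs' : ∑ i, (s i : ℂ) * s i = 1 := by
    simpa [sq] using congrArg Complex.ofReal hs
  ext r r'
  rw [rangeCompl, Matrix.sub_apply, one_apply, diagonal_apply]
  by_cases h' : (r'.1 : ℕ) = 0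
  · obtain ⟨m', rfl⟩ := (exists_zeroIdx_eq_iff hN r').mpr h'
    rw [mul_conjTranspose_contraction_apply_zeroIdx]
    by_cases h : r = zeroIdx n hN m'
    · simp [h, h', contraction, hs']
    · simp [h, contraction]
  · have hne (m : Fin (n 0)) : r' ≠ zeroIdx n hN m :=
      fun h => h' ((exists_zeroIdx_eq_iff hN r').mp ⟨m, h.symm⟩)
    by_cases h : r = r'
    · simp [h, h', mul_apply, contraction, hne]
    · simp [h, mul_apply, contraction, hne]

theorem auxSymbol_mul_conjTranspose_contraction_apply_zeroIdx (r : IN N n) (m : Fin (n 0)) :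
    (auxSymbol A N s * (contraction n hN s)ᴴ) r (zeroIdx n hN m) =
      PN N n A A' s r (zeroIdx n hN m) := by
  rw [mul_conjTranspose_contraction_apply_zeroIdx]
  simp only [auxSymbol, PN, of_apply, zeroIdx, Nat.zero_le, dite_true]
  obtain ⟨⟨μ, hμ⟩, q⟩ := r
  change _ = ∑ k : Fin (μ + 1) → Fin 3, (∏ t, (s (k t) : ℂ)) * A μ 0 k q m
  rw [← (Fin.snocEquiv fun _ : Fin (μ + 1) => Fin 3).sum_comp, Fintype.sum_prod_type]
  refine Finset.sum_congr rfl fun j _ => ?_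
  rw [Finset.sum_mul]
  refine Finset.sum_congr rfl fun K _ => ?_
  have hK : (fun t : Fin (μ + 1) => if h : (t : ℕ) < μ then K ⟨t, h⟩ else j) =
      Fin.snocEquiv (fun _ : Fin (μ + 1) => Fin 3) (j, K) := by
    ext t
    simp [Fin.snocEquiv, Fin.snoc, Fin.castLT]
  rw [← hK, Fin.prod_univ_castSucc]
  simp
  ring

theorem PN_mul_contraction :
    PN N n A A' s * contraction n hN s =
      auxSymbol A N s * ((contraction n hN s)ᴴ * contraction n hN s) := by
  ext r c
  rw [← Matrix.mul_assoc, mul_contraction_apply, mul_contraction_apply,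
    auxSymbol_mul_conjTranspose_contraction_apply_zeroIdx]

theorem PN_apply_of_eq_succ (r c : IN N n) (h : (c.1 : ℕ) = (r.1 : ℕ) + 1) :
    PN N n A A' s r c = A' r.1 r.2 (Fin.cast (congrArg n h) c.2) := by
  rw [PN, of_apply, dif_neg (by omega), dif_pos h]

variable {s} in
theorem curlReducedSymbol_eq_reduction (lam : ℝ) (hs : ∑ i, s i ^ 2 = 1) :
    curlReducedSymbol A A' B10 N lam s =
      reduction (PN N n A A' s) (contraction n hN s) (auxSymbol A N s) (curlSymbol s ⊗ₖ 1) lam := by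
  rw [curlReducedSymbol, reduction, rangeCompl_contraction hN hs]
  ext (⟨i, m⟩ | ⟨μ, q⟩) (⟨j, m'⟩ | ⟨ν, q'⟩)
  · rw [fromBlocks_apply₁₁, Matrix.add_apply, conjTranspose_contraction_mul_apply]
    by_cases h : m = m'
    · subst h
      have hcurl : ∑ k, (s k : ℂ) * (Complex.I * lam * lev i k j) = lam * curlSymbol s i j := by
        simp only [curlSymbol, of_apply, Finset.mul_sum]
        exact Finset.sum_congr rfl fun k _ => by ring
      simp [PNm1, auxSymbol, zeroIdx, hcurl]
    · simp [PNm1, auxSymbol, zeroIdx, curlSymbol, h]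
  · rw [fromBlocks_apply₁₂, mul_diagonal, conjTranspose_contraction_mul_apply]
    obtain ⟨ν, hν⟩ := ν
    simp only [PNm1, of_apply]
    split_ifs with h0 h1
    · rw [mul_zero]
      refine Finset.sum_eq_zero fun k _ => ?_
      split_ifs <;> simp
    · obtain rfl : ν = 1 := h1
      rw [mul_one]
      exact congrArg _ (PN_apply_of_eq_succ A A' s (zeroIdx n hN m) ⟨⟨1, hν⟩, q'⟩ rfl).symm
    · simp_all [PN, zeroIdx]
  · rw [fromBlocks_apply₂₁, diagonal_mul]
    simp only [PNm1, of_apply]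
    split_ifs with h0
    · simp
    · simp [auxSymbol]
  · rw [fromBlocks_apply₂₂, mul_diagonal, diagonal_mul]
    simp only [PNm1, of_apply]
    split_ifs <;> simp

theorem continuous_PN : Continuous (PN N n A A') := by
  refine continuous_matrix fun r c => ?_
  simp only [PN, of_apply]
  split_ifs <;> fun_prop

theorem continuous_auxSymbol : Continuous (auxSymbol A N) := by
  refine continuous_matrix fun r c => ?_
  simp only [auxSymbol, of_apply]
  fun_prop

theorem continuous_contraction : Continuous (contraction n hN) := by
  refine continuous_matrix fun r c => ?_
  simp only [contraction, of_apply]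
  split_ifs <;> fun_prop

end PrincipalSymbols

section StrongHyperbolicity

open scoped Kronecker Matrix.Norms.L2Operator

theorem isCompact_setOf_sum_sq_eq_one {ι : Type*} [Fintype ι] :
    IsCompact {s : ι → ℝ | ∑ i, s i ^ 2 = 1} := by
  refine Metric.isCompact_of_isClosed_isBounded
    (isClosed_eq (by fun_prop) continuous_const) ?_
  refine (Metric.isBounded_closedBall (x := (0 : ι → ℝ)) (r := 1)).subset fun s hs => ?_
  rw [mem_closedBall_zero_iff, pi_norm_le_iff_of_nonneg zero_le_one]
  intro i
  rw [Real.norm_eq_abs, ← sq_le_one_iff_abs_le_one, ← show ∑ i, s i ^ 2 = 1 from hs]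
  exact Finset.single_le_sum (f := fun i => s i ^ 2) (fun j _ => sq_nonneg _) (Finset.mem_univ i)

theorem continuous_curlSymbol_kronecker_one {ι : Type*} [DecidableEq ι] :
    Continuous fun s => curlSymbol s ⊗ₖ (1 : Matrix ι ι ℂ) :=
  continuous_matrix fun i j =>
    (continuous_curlSymbol.matrix_elem i.1 j.1).mul continuous_const

variable {N n}

theorem exists_forall_matOpNorm_PN_lt :
    ∃ lam, ∀ s : Fin 3 → ℝ, ∑ i, s i ^ 2 = 1 → matOpNorm (PN N n A A' s) < lam := by
  obtain ⟨p, hp⟩ := isCompact_setOf_sum_sq_eq_one.exists_bound_of_continuousOn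
    (continuous_PN (N := N) A A').continuousOn
  exact ⟨p + 1, fun s hs => (hp s hs).trans_lt (lt_add_one p)⟩

theorem exists_isSymmetrizer_curlReducedSymbol (hN : 0 < N) {M : ℝ} (hM : 0 < M) {lam : ℝ}
    (hlam : ∀ s : Fin 3 → ℝ, ∑ i, s i ^ 2 = 1 → matOpNorm (PN N n A A' s) < lam)
    (hPN : ∀ s : Fin 3 → ℝ, ∑ i, s i ^ 2 = 1 → ∃ H, IsSymmetrizer M (PN N n A A' s) H) :
    ∃ M₂, 0 < M₂ ∧ ∀ s : Fin 3 → ℝ, ∑ i, s i ^ 2 = 1 →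
      ∃ H₂, IsSymmetrizer M₂ (curlReducedSymbol A A' B10 N lam s) H₂ := by
  let Θ := {s : Fin 3 → ℝ // ∑ i, s i ^ 2 = 1}
  have : CompactSpace Θ := isCompact_iff_compactSpace.mp isCompact_setOf_sum_sq_eq_one
  obtain ⟨M₂, hM₂, hred⟩ := exists_forall_isSymmetrizer_reduction
    (Q := fun θ : Θ => PN N n A A' θ) (S := fun θ => contraction n hN θ)
    (Z := fun θ => auxSymbol A N θ) (J := fun θ => curlSymbol θ ⊗ₖ 1)
    ((continuous_PN A A').comp continuous_subtype_val)
    ((continuous_contraction hN).comp continuous_subtype_val)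
    ((continuous_auxSymbol A).comp continuous_subtype_val)
    (continuous_curlSymbol_kronecker_one.comp continuous_subtype_val)
    (fun θ => isHelmholtzSplitting_contraction_curlSymbol hN θ.2)
    (fun θ => PN_mul_contraction A A' hN θ) (fun θ => hlam θ θ.2) hM
  refine ⟨M₂, hM₂, fun s hs => ?_⟩
  obtain ⟨H, hH⟩ := hPN s hs
  rw [curlReducedSymbol_eq_reduction A A' B10 hN lam hs]
  exact hred ⟨s, hs⟩ H hH

theorem stmt_5_general (hN : 0 < N) {M : ℝ} (hM : 0 < M) {lam : ℝ}
    (hlam : ∀ s : Fin 3 → ℝ, ∑ i, s i ^ 2 = 1 → matOpNorm (PN N n A A' s) < lam)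
    (hPN : ∀ s : Fin 3 → ℝ, ∑ i, s i ^ 2 = 1 → ∃ H, IsSymmetrizer M (PN N n A A' s) H) :
    ∃ K, 0 < K ∧
      (∀ s : Fin 3 → ℝ, ∑ i, s i ^ 2 = 1 →
        IsRealDiagonalizable K (curlReducedSymbol A A' B10 N lam s)) ∧
      ∃ M₂, 0 < M₂ ∧ ∀ s : Fin 3 → ℝ, ∑ i, s i ^ 2 = 1 →
        ∃ H₂, IsSymmetrizer M₂ (curlReducedSymbol A A' B10 N lam s) H₂ := by
  obtain ⟨M₂, hM₂, hred⟩ := exists_isSymmetrizer_curlReducedSymbol A A' B10 hN hM hlam hPN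
  refine ⟨√M₂, Real.sqrt_pos.mpr hM₂, fun s hs => ?_, M₂, hM₂, hred⟩
  obtain ⟨H₂, hH₂⟩ := hred s hs
  exact hH₂.isRealDiagonalizable hM₂

end StrongHyperbolicity

/-- for `N ≥ 2`, FTNS strong hyperbolicity implies the existence of a
strongly hyperbolic FT(N-1)S reduction; one may take the partial choice
`(D⁰)^k = -(A⁰₀)^k`, `Dᵢ^k = -B⁰₁₀ δᵢ^k`, `(D^μ) = -(B^μ₁₀)`, all `D̄` zero except
`D̄ᵢ^{kj} = iλ εᵢ^{kj}` with `λ` exceeding the operator norm of `P_N(s)` for all unit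
`s`; then `P_{N-1}(s)` is uniformly diagonalizable with real eigenvalues.  In particular
the system is FT(N-1)S strongly hyperbolic. -/
theorem stmt_5 (hN : 2 ≤ N)
    (M : ℝ) (hM : 0 < M)
    (HN : (Fin 3 → ℝ) → Matrix (IN N n) (IN N n) ℂ)
    (hHN : ∀ s : Fin 3 → ℝ, (∑ i, s i ^ 2) = 1 →
      (HN s).IsHermitian ∧
      HN s * PN N n A A' s = (PN N n A A' s)ᴴ * HN s ∧
      loewnerLE (((M⁻¹ : ℝ) : ℂ) • 1) (HN s) ∧
      loewnerLE (HN s) (((M : ℝ) : ℂ) • 1)) :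
    ∃ lam : ℝ,
      (∀ s : Fin 3 → ℝ, (∑ i, s i ^ 2) = 1 → matOpNorm (PN N n A A' s) < lam) ∧
      ∃ K : ℝ, 0 < K ∧
        (∀ s : Fin 3 → ℝ, (∑ i, s i ^ 2) = 1 →
          ∃ T Tinv : Matrix (INm1 N n) (INm1 N n) ℂ,
            T * Tinv = 1 ∧ Tinv * T = 1 ∧ matOpNorm T ≤ K ∧ matOpNorm Tinv ≤ K ∧
            ∃ Λ : INm1 N n → ℝ,
              Tinv *
                  PNm1 N n A A' B10
                    (fun k => -(A 0 0 (fun _ => k)))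
                    (fun _ _ => 0)
                    (fun i k => if i = k then -(B10 0 Fin.elim0) else 0)
                    (fun i k j => (Complex.I * (lam : ℂ) * (lev i k j : ℂ)) •
                      (1 : Matrix (Fin (n 0)) (Fin (n 0)) ℂ))
                    (fun μ K' => -(B10 μ K'))
                    (fun _ _ _ _ => 0) s * T
                = Matrix.diagonal (fun r => (Λ r : ℂ))) ∧
        (∃ M2 : ℝ, 0 < M2 ∧ ∀ s : Fin 3 → ℝ, (∑ i, s i ^ 2) = 1 →
          ∃ H2 : Matrix (INm1 N n) (INm1 N n) ℂ,
            H2.IsHermitian ∧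
            H2 * PNm1 N n A A' B10
                (fun k => -(A 0 0 (fun _ => k))) (fun _ _ => 0)
                (fun i k => if i = k then -(B10 0 Fin.elim0) else 0)
                (fun i k j => (Complex.I * (lam : ℂ) * (lev i k j : ℂ)) •
                  (1 : Matrix (Fin (n 0)) (Fin (n 0)) ℂ))
                (fun μ K' => -(B10 μ K')) (fun _ _ _ _ => 0) s
              = (PNm1 N n A A' B10
                  (fun k => -(A 0 0 (fun _ => k))) (fun _ _ => 0)
                  (fun i k => if i = k then -(B10 0 Fin.elim0) else 0)
                  (fun i k j => (Complex.I * (lam : ℂ) * (lev i k j : ℂ)) •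
                    (1 : Matrix (Fin (n 0)) (Fin (n 0)) ℂ))
                  (fun μ K' => -(B10 μ K')) (fun _ _ _ _ => 0) s)ᴴ * H2 ∧
            loewnerLE (((M2⁻¹ : ℝ) : ℂ) • 1) H2 ∧
            loewnerLE H2 (((M2 : ℝ) : ℂ) • 1)) := by
  obtain ⟨lam, hlam⟩ := exists_forall_matOpNorm_PN_lt A A'
  exact ⟨lam, hlam, stmt_5_general A A' B10 (two_pos.trans_le hN) hM hlam
    fun s hs => ⟨HN s, hHN s hs⟩⟩
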